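/- (Existence in the well-ordered case, negative λ.) Let α ≥ 1, set ν = (1−α)/2, let 0 < η < 1, let λ < 0, and suppose (H_0') holds: δ > 0, K_ν(√|λ|) − δ·η^ν·K_ν(η·√|λ|) ≤ 0, and I_{−ν}(√|λ|) − δ·η^ν·I_{−ν}(η·√|λ|) > 0. Suppose: (i) u₀ and v₀ are twice continuously differentiable on [0,1] with v₀(x) ≤ u₀(x) for all x ∈ [0,1], u₀ is an upper solution and v₀ is a lower solution; (ii) f is continuous on D₂ := {(x,y) : x ∈ [0,1], v₀(x) ≤ y ≤ u₀(x)}; (iii) there exists M₃ ≥ 0 such that for all (x,ỹ), (x,w̃) ∈ D₂ with ỹ ≤ w̃ one has f(x,w̃) − f(x,ỹ) ≥ −M₃·(w̃ − ỹ); and (iv) M₃ + λ ≤ 0. Then there exist solutions v and u of the boundary value problem with v₀ ≤ v ≤ u ≤ u₀ on [0,1], and every solution z of the boundary value problem satisfying v₀ ≤ z ≤ u₀ on [0,1] satisfies v ≤ z ≤ u on [0,1]; in particular, the boundary value problem has at least one solution in D₂. -/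

import Mathlib

/-- The modified Bessel function of the first kind of real order `μ`. -/
noncomputable def besselI (μ x : ℝ) : ℝ :=
  ∑' m : ℕ, (1 / ((m.factorial : ℝ) * Real.Gamma ((m : ℝ) + μ + 1))) *
    (x / 2) ^ (2 * (m : ℝ) + μ)

/-- The modified Bessel function of the second kind of real order `μ`,
`K_μ(x) = ∫_0^∞ e^{−x·cosh t}·cosh(μt) dt`. -/
noncomputable def besselK (μ x : ℝ) : ℝ :=
  ∫ t in Set.Ioi (0 : ℝ), Real.exp (-(x * Real.cosh t)) * Real.cosh (μ * t)

/-- `y` is a solution of the three-point singular BVP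
`−(x^α y')' = x^α f(x, y)` on `(0,1)`, `y'(0) = 0`, `y(1) = δ·y(η)`:
`y` is continuous on `[0,1]`, continuously differentiable on `[0,1]`, twice
differentiable on `(0,1)`, satisfies the equation on `(0,1)` (with
`(x^α y')' = α x^{α−1} y' + x^α y''`) and both boundary conditions. -/
def IsBVPSolution (α δ η : ℝ) (f : ℝ → ℝ → ℝ) (y : ℝ → ℝ) : Prop :=
  ContinuousOn y (Set.Icc 0 1) ∧
  (∀ x ∈ Set.Icc (0 : ℝ) 1, DifferentiableAt ℝ y x) ∧
  ContinuousOn (deriv y) (Set.Icc 0 1) ∧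
  (∀ x ∈ Set.Ioo (0 : ℝ) 1, DifferentiableAt ℝ (deriv y) x) ∧
  (∀ x ∈ Set.Ioo (0 : ℝ) 1,
    -(α * x ^ (α - 1) * deriv y x + x ^ α * deriv (deriv y) x) = x ^ α * f x (y x)) ∧
  deriv y 0 = 0 ∧ y 1 = δ * y η

/-- `u` is an upper solution of the three-point singular BVP: `u` is twice
continuously differentiable on `[0,1]`, `−(x^α u')' ≥ x^α f(x, u)` on `(0,1)`,
`u'(0) = 0` and `u(1) ≥ δ·u(η)`. -/
def IsUpperSolution (α δ η : ℝ) (f : ℝ → ℝ → ℝ) (u : ℝ → ℝ) : Prop :=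
  (∀ x ∈ Set.Icc (0 : ℝ) 1, DifferentiableAt ℝ u x) ∧
  (∀ x ∈ Set.Icc (0 : ℝ) 1, DifferentiableAt ℝ (deriv u) x) ∧
  ContinuousOn (deriv (deriv u)) (Set.Icc 0 1) ∧
  (∀ x ∈ Set.Ioo (0 : ℝ) 1,
    x ^ α * f x (u x) ≤ -(α * x ^ (α - 1) * deriv u x + x ^ α * deriv (deriv u) x)) ∧
  deriv u 0 = 0 ∧ δ * u η ≤ u 1

/-- `v` is a lower solution of the three-point singular BVP: `v` is twice
continuously differentiable on `[0,1]`, `−(x^α v')' ≤ x^α f(x, v)` on `(0,1)`,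
`v'(0) = 0` and `v(1) ≤ δ·v(η)`. -/
def IsLowerSolution (α δ η : ℝ) (f : ℝ → ℝ → ℝ) (v : ℝ → ℝ) : Prop :=
  (∀ x ∈ Set.Icc (0 : ℝ) 1, DifferentiableAt ℝ v x) ∧
  (∀ x ∈ Set.Icc (0 : ℝ) 1, DifferentiableAt ℝ (deriv v) x) ∧
  ContinuousOn (deriv (deriv v)) (Set.Icc 0 1) ∧
  (∀ x ∈ Set.Ioo (0 : ℝ) 1,
    -(α * x ^ (α - 1) * deriv v x + x ^ α * deriv (deriv v) x) ≤ x ^ α * f x (v x)) ∧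
  deriv v 0 = 0 ∧ v 1 ≤ δ * v η

/-!
Adding `-λ * x ^ α * y` to both sides turns the problem into `y = T (N y)`, where `N` is the
superposition operator of `f x y - λ * y`, increasing between `v₀` and `u₀` because `M₃ + λ ≤ 0`,
and `T` solves the linear three-point problem `-(x ^ α * y')' - λ * x ^ α * y = x ^ α * h`.

The linear problem is controlled by `φ x = x ^ ν * I_{-ν}(√|λ| * x)` (up to a constant factor), a
positive solution of the homogeneous equation with `φ' 0 = 0`. If `w` is a supersolution of the
homogeneous problem, then the Wronskian `x ^ α * (φ * w' - φ' * w)` vanishes at `0` and decreases,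
so `w / φ` decreases; since the assumption on `I_{-ν}` says `δ * φ η < φ 1`, the three-point
condition then forces `w ≥ 0`. Hence `T` is increasing. Reduction of order with `φ` gives an
explicit formula for `T`, from which it is continuous and maps bounded sets of `C([0, 1])` into
compact sets. The iterates of `T ∘ N`, truncated outside the order interval, converge monotonically
from `v₀` and from `u₀` to its least and greatest fixed points.
-/

open Filter Set Topology Function
open scoped unitInterval NNReal

section MonotoneFixedPoints

variable {X : Type*} [TopologicalSpace X] [PartialOrder X] [OrderClosedTopology X]

theorem isLUB_range_of_mapClusterPt {u : ℕ → X} (hu : Monotone u) {p : X}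
    (hp : MapClusterPt p atTop u) : IsLUB (range u) p := by
  refine ⟨?_, fun c hc => ?_⟩
  · rintro _ ⟨n, rfl⟩
    exact isClosed_Ici.mem_of_mapClusterPt hp (eventually_ge_atTop n |>.mono fun _ h => hu h)
  · exact isClosed_Iic.mem_of_mapClusterPt hp (.of_forall fun n => hc (mem_range_self n))

theorem exists_tendsto_isLUB_of_isCompact {u : ℕ → X} (hu : Monotone u) {K : Set X}
    (hK : IsCompact K) (huK : ∀ᶠ n in atTop, u n ∈ K) :
    ∃ p, Tendsto u atTop (𝓝 p) ∧ IsLUB (range u) p := by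
  obtain ⟨p, -, hp⟩ := hK.exists_mapClusterPt (tendsto_principal.2 huK)
  have hlub := isLUB_range_of_mapClusterPt hu hp
  exact ⟨p, hK.tendsto_nhds_of_unique_mapClusterPt huK fun q _ hq =>
    (isLUB_range_of_mapClusterPt hu hq).unique hlub, hlub⟩

theorem exists_least_fixedPoint_ge_of_monotone {S : X → X} (hS : Monotone S) (hcont : Continuous S)
    {K : Set X} (hK : IsCompact K) (hSK : ∀ x, S x ∈ K) {a : X} (ha : a ≤ S a) :
    ∃ p, S p = p ∧ a ≤ p ∧ ∀ z, a ≤ z → S z ≤ z → p ≤ z := by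
  have hmem : ∀ᶠ n in atTop, S^[n] a ∈ K := by
    filter_upwards [eventually_ge_atTop 1] with n hn
    obtain ⟨m, rfl⟩ := Nat.exists_eq_add_of_le' hn
    exact iterate_succ_apply' S m a ▸ hSK _
  obtain ⟨p, hp, hlub⟩ :=
    exists_tendsto_isLUB_of_isCompact (hS.monotone_iterate_of_le_map ha) hK hmem
  refine ⟨p, isFixedPt_of_tendsto_iterate hp hcont.continuousAt, hlub.1 ⟨0, rfl⟩,
    fun z haz hz => hlub.2 ?_⟩
  rintro _ ⟨n, rfl⟩
  exact (hS.iterate n haz).trans (hS.antitone_iterate_of_map_le hz (Nat.zero_le n))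

theorem exists_greatest_fixedPoint_le_of_monotone {S : X → X} (hS : Monotone S)
    (hcont : Continuous S) {K : Set X} (hK : IsCompact K) (hSK : ∀ x, S x ∈ K) {b : X}
    (hb : S b ≤ b) : ∃ q, S q = q ∧ q ≤ b ∧ ∀ z, z ≤ b → z ≤ S z → z ≤ q :=
  exists_least_fixedPoint_ge_of_monotone (X := Xᵒᵈ) hS.dual hcont hK hSK hb

theorem exists_extremal_fixedPoints_of_monotone {S : X → X} (hS : Monotone S)
    (hcont : Continuous S) {K : Set X} (hK : IsCompact K) (hSK : ∀ x, S x ∈ K) {a b : X}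
    (hab : a ≤ b) (ha : a ≤ S a) (hb : S b ≤ b) :
    ∃ p q, S p = p ∧ S q = q ∧ a ≤ p ∧ p ≤ q ∧ q ≤ b ∧
      ∀ z, S z = z → a ≤ z → z ≤ b → p ≤ z ∧ z ≤ q := by
  obtain ⟨p, hSp, hap, hp⟩ := exists_least_fixedPoint_ge_of_monotone hS hcont hK hSK ha
  obtain ⟨q, hSq, hqb, hq⟩ := exists_greatest_fixedPoint_le_of_monotone hS hcont hK hSK hb
  exact ⟨p, q, hSp, hSq, hap, hq p (hp b hab hb) hSp.ge, hqb,
    fun z hSz haz hzb => ⟨hp z haz hSz.le, hq z hzb hSz.ge⟩⟩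

end MonotoneFixedPoints

instance continuousMap_orderClosedTopology {X Y : Type*} [TopologicalSpace X] [TopologicalSpace Y]
    [PartialOrder Y] [OrderClosedTopology Y] : OrderClosedTopology C(X, Y) where
  isClosed_le' := isClosed_le (α := X → Y) (continuous_coeFun.comp continuous_fst)
    (continuous_coeFun.comp continuous_snd)

theorem isCompact_setOf_lipschitzWith_abs_le {X : Type*} [PseudoMetricSpace X] (C : ℝ≥0) (R : ℝ) :
    IsCompact {w : C(X, ℝ) | LipschitzWith C w ∧ ∀ x, |w x| ≤ R} := by
  refine ArzelaAscoli.isCompact_of_equicontinuous _ ?_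
    (LipschitzWith.uniformEquicontinuous _ C fun w => w.2.1).equicontinuous
  have himage : ContinuousMap.toFun '' {w : C(X, ℝ) | LipschitzWith C w ∧ ∀ x, |w x| ≤ R} =
      {w : X → ℝ | LipschitzWith C w} ∩ univ.pi fun _ => Icc (-R) R := by
    ext w
    constructor
    · rintro ⟨w, hw, rfl⟩
      exact ⟨hw.1, fun x _ => abs_le.1 (hw.2 x)⟩
    · rintro ⟨hlip, hR⟩
      exact ⟨⟨w, hlip.continuous⟩, ⟨hlip, fun x => abs_le.2 (hR x trivial)⟩, rfl⟩
  rw [himage]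
  exact (isCompact_univ_pi fun _ => isCompact_Icc).inter_left (isClosed_setOfPred_lipschitzWith C)

section BesselClifford

open scoped Nat

/-- The coefficient of `z ^ m` in the Bessel–Clifford function of order `μ`. At the poles of
`Gamma` it is `0`, which is the value of the entire function `1 / Gamma`. -/
noncomputable def besselCliffordCoeff (μ : ℝ) (m : ℕ) : ℝ :=
  1 / ((m ! : ℝ) * Real.Gamma (m + μ + 1))

/-- The Bessel–Clifford function `C_μ`, the entire part of the modified Bessel function:
`I_μ(x) = (x / 2) ^ μ * C_μ(x ^ 2 / 4)`. -/
noncomputable def besselClifford (μ z : ℝ) : ℝ :=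
  ∑' m : ℕ, besselCliffordCoeff μ m * z ^ m

variable (μ z : ℝ)

theorem abs_besselCliffordCoeff_le_eventually :
    ∀ᶠ m : ℕ in atTop, |besselCliffordCoeff μ m| ≤ 1 / m ! := by
  filter_upwards [tendsto_natCast_atTop_atTop.eventually_ge_atTop (1 - μ)] with m hm
  have hGamma : 1 ≤ Real.Gamma (m + μ + 1) := by
    simpa using Real.Gamma_strictMonoOn_Ici.monotoneOn (mem_Ici.2 le_rfl)
      (mem_Ici.2 (by linarith)) (by linarith : 2 ≤ m + μ + 1)
  have hm0 : (0 : ℝ) < m ! := by positivity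
  rw [besselCliffordCoeff, abs_of_pos (by positivity)]
  gcongr
  exact le_mul_of_one_le_right hm0.le hGamma

theorem summable_abs_besselClifford :
    Summable fun m : ℕ => |besselCliffordCoeff μ m| * |z| ^ m := by
  refine .of_norm_bounded_eventually_nat (Real.summable_pow_div_factorial |z|) ?_
  filter_upwards [abs_besselCliffordCoeff_le_eventually μ] with m hm
  rw [Real.norm_of_nonneg (by positivity)]
  calc |besselCliffordCoeff μ m| * |z| ^ m ≤ 1 / m ! * |z| ^ m := by gcongr
    _ = |z| ^ m / m ! := by ring

theorem summable_besselClifford : Summable fun m : ℕ => besselCliffordCoeff μ m * z ^ m :=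
  .of_norm (by simpa [abs_mul, abs_pow] using summable_abs_besselClifford μ z)

theorem besselClifford_pos {μ z : ℝ} (hμ : -1 < μ) (hz : 0 ≤ z) : 0 < besselClifford μ z := by
  have hcoeff (m : ℕ) : 0 < besselCliffordCoeff μ m := by
    have : 0 < Real.Gamma (m + μ + 1) :=
      Real.Gamma_pos_of_pos (by linarith [(m.cast_nonneg : (0 : ℝ) ≤ m)])
    unfold besselCliffordCoeff
    positivity
  exact (summable_besselClifford μ z).tsum_pos
    (fun m => mul_nonneg (hcoeff m).le (pow_nonneg hz m)) 0 (by simpa using hcoeff 0)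

theorem besselCliffordCoeff_succ_mul (m : ℕ) :
    besselCliffordCoeff μ (m + 1) * (m + 1 : ℕ) = besselCliffordCoeff (μ + 1) m := by
  have hm : (m : ℝ) + 1 ≠ 0 := by positivity
  simp only [besselCliffordCoeff, Nat.factorial_succ, Nat.cast_mul, Nat.cast_add, Nat.cast_one,
    show (m : ℝ) + 1 + μ + 1 = m + (μ + 1) + 1 by ring, one_div, mul_inv]
  field_simp

theorem hasDerivAt_besselClifford : HasDerivAt (besselClifford μ) (besselClifford (μ + 1) z) z := by
  have hterm (m : ℕ) (y : ℝ) : HasDerivAt (fun y => besselCliffordCoeff μ (m + 1) * y ^ (m + 1))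
      (besselCliffordCoeff (μ + 1) m * y ^ m) y := by
    refine ((hasDerivAt_pow (m + 1) y).const_mul _).congr_deriv ?_
    rw [← besselCliffordCoeff_succ_mul, Nat.add_sub_cancel, mul_assoc]
  have htail : HasDerivAt (fun y => ∑' m : ℕ, besselCliffordCoeff μ (m + 1) * y ^ (m + 1))
      (besselClifford (μ + 1) z) z := by
    refine hasDerivAt_tsum_of_isPreconnected (t := Metric.ball 0 (|z| + 1)) (y₀ := 0)
      (summable_abs_besselClifford (μ + 1) (|z| + 1)) Metric.isOpen_ball
      (convex_ball _ _).isPreconnected (fun m y _ => hterm m y) (fun m y hy => ?_)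
      (Metric.mem_ball_self (by positivity)) (by simp) (by simp)
    rw [mem_ball_zero_iff, Real.norm_eq_abs] at hy
    rw [norm_mul, norm_pow, Real.norm_eq_abs, Real.norm_eq_abs]
    exact mul_le_mul_of_nonneg_left
      (pow_le_pow_left₀ (abs_nonneg y) (hy.le.trans (le_abs_self _)) m) (abs_nonneg _)
  have hsplit : besselClifford μ = fun y => besselCliffordCoeff μ 0 * y ^ 0 +
      ∑' m : ℕ, besselCliffordCoeff μ (m + 1) * y ^ (m + 1) :=
    funext fun y => (summable_besselClifford μ y).tsum_eq_zero_add
  rw [hsplit]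
  simpa only [pow_zero] using htail.const_add _

theorem Gamma_inv_eq_mul_Gamma_add_one_inv (s : ℝ) :
    (Real.Gamma s)⁻¹ = s * (Real.Gamma (s + 1))⁻¹ := by
  rcases eq_or_ne s 0 with rfl | hs
  · simp
  · rw [Real.Gamma_add_one hs]
    field_simp

theorem besselCliffordCoeff_eq_add_mul (m : ℕ) :
    besselCliffordCoeff μ m = (m + μ + 1) * besselCliffordCoeff (μ + 1) m := by
  simp only [besselCliffordCoeff, one_div, mul_inv, Gamma_inv_eq_mul_Gamma_add_one_inv (m + μ + 1),
    show (m : ℝ) + (μ + 1) + 1 = m + μ + 1 + 1 by ring]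
  ring

theorem besselClifford_recurrence :
    z * besselClifford (μ + 1 + 1) z + (μ + 1) * besselClifford (μ + 1) z =
      besselClifford μ z := by
  have hterm (m : ℕ) : ((m + 1 : ℕ) : ℝ) * besselCliffordCoeff (μ + 1) (m + 1) * z ^ (m + 1) =
      z * (besselCliffordCoeff (μ + 1 + 1) m * z ^ m) := by
    rw [← besselCliffordCoeff_succ_mul (μ + 1) m]
    ring
  have hsum : Summable fun m : ℕ => m * besselCliffordCoeff (μ + 1) m * z ^ m := by
    rw [← summable_nat_add_iff 1]
    simpa only [hterm] using (summable_besselClifford (μ + 1 + 1) z).mul_left z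
  have hshift : z * besselClifford (μ + 1 + 1) z =
      ∑' m : ℕ, m * besselCliffordCoeff (μ + 1) m * z ^ m := by
    rw [hsum.tsum_eq_zero_add]
    simp only [hterm, tsum_mul_left, besselClifford, Nat.cast_zero, zero_mul, zero_add]
  rw [hshift, besselClifford, ← tsum_mul_left,
    ← hsum.tsum_add ((summable_besselClifford (μ + 1) z).mul_left _)]
  refine tsum_congr fun m => ?_
  rw [besselCliffordCoeff_eq_add_mul μ m]
  ring

theorem besselI_eq_rpow_mul_besselClifford {x : ℝ} (hx : 0 < x) :
    besselI μ x = (x / 2) ^ μ * besselClifford μ ((x / 2) ^ 2) := by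
  unfold besselI besselClifford
  rw [← tsum_mul_left]
  refine tsum_congr fun m => ?_
  rw [Real.rpow_add (by positivity), ← pow_mul, ← Nat.cast_ofNat, ← Nat.cast_mul,
    Real.rpow_natCast, besselCliffordCoeff]
  ring

end BesselClifford

section MaximumPrinciple

/-- The singular Sturm–Liouville operator `y ↦ -(x ^ α * y')'`, with the derivative of the product
expanded as in `IsBVPSolution`. -/
noncomputable def sturmOp (α : ℝ) (y : ℝ → ℝ) (x : ℝ) : ℝ :=
  -(α * x ^ (α - 1) * deriv y x + x ^ α * deriv (deriv y) x)

/-- The regularity required of a solution in `IsBVPSolution`: `C¹` on `[0, 1]` and twice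
differentiable on `(0, 1)`. -/
structure IsBVPRegular (y : ℝ → ℝ) : Prop where
  differentiableAt : ∀ x ∈ Icc (0 : ℝ) 1, DifferentiableAt ℝ y x
  continuousOn_deriv : ContinuousOn (deriv y) (Icc 0 1)
  differentiableAt_deriv : ∀ x ∈ Ioo (0 : ℝ) 1, DifferentiableAt ℝ (deriv y) x

/-- A positive solution `φ`, regular at the origin, of the homogeneous linear equation
`-(x ^ α * φ')' + κ * x ^ α * φ = 0`. For `κ > 0` it is a multiple of
`x ^ ν * I_{-ν}(√κ * x)`, `ν = (1 - α) / 2`. -/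
structure IsPosRadialSolution (α κ : ℝ) (φ : ℝ → ℝ) : Prop where
  differentiable : Differentiable ℝ φ
  differentiable_deriv : Differentiable ℝ (deriv φ)
  sturmOp_add_eq_zero : ∀ x, 0 < x → sturmOp α φ x + κ * x ^ α * φ x = 0
  deriv_zero : deriv φ 0 = 0
  pos : ∀ x, 0 < φ x

/-- The Wronskian of `φ` and `w` with the weight `x ^ α` of the operator `sturmOp α`. -/
noncomputable def weightedWronskian (α : ℝ) (φ w : ℝ → ℝ) (x : ℝ) : ℝ :=
  x ^ α * (φ x * deriv w x - deriv φ x * w x)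

variable {α κ δ η : ℝ} {φ w y z : ℝ → ℝ} {x : ℝ}

theorem IsBVPRegular.continuousOn (hy : IsBVPRegular y) : ContinuousOn y (Icc 0 1) :=
  fun x hx => (hy.differentiableAt x hx).continuousAt.continuousWithinAt

theorem deriv_sub_eventuallyEq (hy : IsBVPRegular y) (hz : IsBVPRegular z)
    (hx : x ∈ Ioo (0 : ℝ) 1) : deriv (y - z) =ᶠ[𝓝 x] deriv y - deriv z := by
  filter_upwards [Ioo_mem_nhds hx.1 hx.2] with t ht
  have ht' := Ioo_subset_Icc_self ht
  exact deriv_sub (hy.differentiableAt t ht') (hz.differentiableAt t ht')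

theorem IsBVPRegular.sub (hy : IsBVPRegular y) (hz : IsBVPRegular z) : IsBVPRegular (y - z) where
  differentiableAt x hx := (hy.differentiableAt x hx).sub (hz.differentiableAt x hx)
  continuousOn_deriv := (hy.continuousOn_deriv.sub hz.continuousOn_deriv).congr fun x hx =>
    deriv_sub (hy.differentiableAt x hx) (hz.differentiableAt x hx)
  differentiableAt_deriv x hx :=
    ((hy.differentiableAt_deriv x hx).sub
      (hz.differentiableAt_deriv x hx)).congr_of_eventuallyEq (deriv_sub_eventuallyEq hy hz hx)

theorem sturmOp_sub (hy : IsBVPRegular y) (hz : IsBVPRegular z) (hx : x ∈ Ioo (0 : ℝ) 1) :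
    sturmOp α (y - z) x = sturmOp α y x - sturmOp α z x := by
  have h1 := (deriv_sub_eventuallyEq hy hz hx).eq_of_nhds
  have h2 := (deriv_sub_eventuallyEq hy hz hx).deriv_eq
  rw [deriv_sub (hy.differentiableAt_deriv x hx) (hz.differentiableAt_deriv x hx)] at h2
  rw [sturmOp, sturmOp, sturmOp, h1, h2, Pi.sub_apply]
  ring

/-- Lagrange's identity. -/
theorem hasDerivAt_weightedWronskian (hx : 0 < x) (hφ : DifferentiableAt ℝ φ x)
    (hφ' : DifferentiableAt ℝ (deriv φ) x) (hw : DifferentiableAt ℝ w x)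
    (hw' : DifferentiableAt ℝ (deriv w) x) :
    HasDerivAt (weightedWronskian α φ w) (sturmOp α φ x * w x - φ x * sturmOp α w x) x := by
  refine ((Real.hasDerivAt_rpow_const (p := α) (Or.inl hx.ne')).mul
    ((hφ.hasDerivAt.mul hw'.hasDerivAt).sub (hφ'.hasDerivAt.mul hw.hasDerivAt))).congr_deriv ?_
  simp only [sturmOp, Pi.mul_apply, Pi.sub_apply]
  ring

namespace IsPosRadialSolution

theorem continuous (hφ : IsPosRadialSolution α κ φ) : Continuous φ := hφ.differentiable.continuous

theorem hasDerivAt_weightedWronskian (hφ : IsPosRadialSolution α κ φ) (hx : 0 < x)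
    (hw : DifferentiableAt ℝ w x) (hw' : DifferentiableAt ℝ (deriv w) x) :
    HasDerivAt (weightedWronskian α φ w) (-(φ x * (sturmOp α w x + κ * x ^ α * w x))) x := by
  refine (_root_.hasDerivAt_weightedWronskian hx (hφ.differentiable x) (hφ.differentiable_deriv x)
    hw hw').congr_deriv ?_
  linear_combination w x * hφ.sturmOp_add_eq_zero x hx

theorem weightedWronskian_nonpos (hφ : IsPosRadialSolution α κ φ) (hα : 0 < α) (hw : IsBVPRegular w)
    (hop : ∀ x ∈ Ioo (0 : ℝ) 1, 0 ≤ sturmOp α w x + κ * x ^ α * w x) (hx : x ∈ Icc (0 : ℝ) 1) :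
    weightedWronskian α φ w x ≤ 0 := by
  have hcont : ContinuousOn (weightedWronskian α φ w) (Icc 0 1) :=
    (Real.continuous_rpow_const hα.le).continuousOn.mul
      ((hφ.continuous.continuousOn.mul hw.continuousOn_deriv).sub
        (hφ.differentiable_deriv.continuous.continuousOn.mul hw.continuousOn))
  have hderiv (t) (ht : t ∈ Ioo (0 : ℝ) 1) := hφ.hasDerivAt_weightedWronskian ht.1
    (hw.differentiableAt t (Ioo_subset_Icc_self ht)) (hw.differentiableAt_deriv t ht)
  have hanti : AntitoneOn (weightedWronskian α φ w) (Icc 0 1) := by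
    refine antitoneOn_of_hasDerivWithinAt_nonpos (convex_Icc 0 1) hcont
      (fun t ht => (hderiv t (interior_Icc.subset ht)).hasDerivWithinAt) fun t ht => ?_
    exact neg_nonpos.2 (mul_nonneg (hφ.pos t).le (hop t (interior_Icc.subset ht)))
  calc weightedWronskian α φ w x ≤ weightedWronskian α φ w 0 :=
        hanti (left_mem_Icc.2 zero_le_one) hx hx.1
    _ = 0 := by rw [weightedWronskian, Real.zero_rpow hα.ne', zero_mul]

theorem antitoneOn_div (hφ : IsPosRadialSolution α κ φ) (hα : 0 < α) (hw : IsBVPRegular w)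
    (hop : ∀ x ∈ Ioo (0 : ℝ) 1, 0 ≤ sturmOp α w x + κ * x ^ α * w x) :
    AntitoneOn (fun x => w x / φ x) (Icc 0 1) := by
  have hderiv (t) (ht : t ∈ Ioo (0 : ℝ) 1) :=
    (hw.differentiableAt t (Ioo_subset_Icc_self ht)).hasDerivAt.div
      (hφ.differentiable t).hasDerivAt (hφ.pos t).ne'
  refine antitoneOn_of_hasDerivWithinAt_nonpos (convex_Icc 0 1)
    (hw.continuousOn.div hφ.continuous.continuousOn fun t _ => (hφ.pos t).ne')
    (fun t ht => (hderiv t (interior_Icc.subset ht)).hasDerivWithinAt) fun t ht => ?_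
  rw [interior_Icc] at ht
  have hwronskian := nonpos_of_mul_nonpos_right
    (hφ.weightedWronskian_nonpos hα hw hop (Ioo_subset_Icc_self ht)) (Real.rpow_pos_of_pos ht.1 α)
  exact div_nonpos_of_nonpos_of_nonneg (by linarith) (sq_nonneg _)

/-- Since `w / φ` is antitone, it is nonnegative as soon as it is so at `1`, and there the
three-point condition together with `δ * φ η < φ 1` excludes negative values. -/
theorem nonneg_of_sturmOp_nonneg (hφ : IsPosRadialSolution α κ φ) (hα : 0 < α)
    (hη : η ∈ Icc (0 : ℝ) 1) (hδ : 0 ≤ δ) (hδφ : δ * φ η < φ 1) (hw : IsBVPRegular w)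
    (hop : ∀ x ∈ Ioo (0 : ℝ) 1, 0 ≤ sturmOp α w x + κ * x ^ α * w x) (hbc : δ * w η ≤ w 1)
    (hx : x ∈ Icc (0 : ℝ) 1) : 0 ≤ w x := by
  have hanti := hφ.antitoneOn_div hα hw hop
  have hmul (t : ℝ) : w t = w t / φ t * φ t := (div_mul_cancel₀ _ (hφ.pos t).ne').symm
  have hone : 0 ≤ w 1 / φ 1 := by
    have hle : δ * φ η * (w 1 / φ 1) ≤ δ * φ η * (w η / φ η) :=
      mul_le_mul_of_nonneg_left (hanti hη (right_mem_Icc.2 zero_le_one) hη.2)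
        (mul_nonneg hδ (hφ.pos η).le)
    rw [hmul η, hmul 1] at hbc
    exact nonneg_of_mul_nonneg_right (by linarith : 0 ≤ (φ 1 - δ * φ η) * (w 1 / φ 1))
      (sub_pos.2 hδφ)
  rw [hmul x]
  exact mul_nonneg (hone.trans (hanti hx (right_mem_Icc.2 zero_le_one) hx.2)) (hφ.pos x).le

end IsPosRadialSolution

end MaximumPrinciple

section Comparison

/-- A supersolution of the boundary value problem in the weakest sense the comparison principle
needs: unlike in `IsUpperSolution`, only the regularity `IsBVPRegular` is required and the slope
at `0` is free. -/
structure IsSupersolution (α δ η : ℝ) (f : ℝ → ℝ → ℝ) (u : ℝ → ℝ) : Prop where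
  regular : IsBVPRegular u
  le_sturmOp : ∀ x ∈ Ioo (0 : ℝ) 1, x ^ α * f x (u x) ≤ sturmOp α u x
  boundary_le : δ * u η ≤ u 1

/-- A subsolution of the boundary value problem, in the sense dual to `IsSupersolution`. -/
structure IsSubsolution (α δ η : ℝ) (f : ℝ → ℝ → ℝ) (v : ℝ → ℝ) : Prop where
  regular : IsBVPRegular v
  sturmOp_le : ∀ x ∈ Ioo (0 : ℝ) 1, sturmOp α v x ≤ x ^ α * f x (v x)
  le_boundary : v 1 ≤ δ * v η

variable {α κ δ η : ℝ} {f g : ℝ → ℝ → ℝ} {h φ u v y : ℝ → ℝ}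

theorem IsUpperSolution.isSupersolution (hu : IsUpperSolution α δ η f u) :
    IsSupersolution α δ η f u :=
  let ⟨hdiff, hdiff', _, hle, _, hbc⟩ := hu
  ⟨⟨hdiff, fun x hx => (hdiff' x hx).continuousAt.continuousWithinAt,
    fun x hx => hdiff' x (Ioo_subset_Icc_self hx)⟩, hle, hbc⟩

theorem IsLowerSolution.isSubsolution (hv : IsLowerSolution α δ η f v) :
    IsSubsolution α δ η f v :=
  let ⟨hdiff, hdiff', _, hle, _, hbc⟩ := hv
  ⟨⟨hdiff, fun x hx => (hdiff' x hx).continuousAt.continuousWithinAt,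
    fun x hx => hdiff' x (Ioo_subset_Icc_self hx)⟩, hle, hbc⟩

theorem IsBVPSolution.isSupersolution (hy : IsBVPSolution α δ η f y) :
    IsSupersolution α δ η f y :=
  let ⟨_, hdiff, hcont, hdiff', heq, _, hbc⟩ := hy
  ⟨⟨hdiff, hcont, hdiff'⟩, fun x hx => (heq x hx).ge, hbc.ge⟩

theorem IsBVPSolution.isSubsolution (hy : IsBVPSolution α δ η f y) : IsSubsolution α δ η f y :=
  let ⟨_, hdiff, hcont, hdiff', heq, _, hbc⟩ := hy
  ⟨⟨hdiff, hcont, hdiff'⟩, fun x hx => (heq x hx).le, hbc.le⟩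

theorem IsSupersolution.of_le (hu : IsSupersolution α δ η f u)
    (hgf : ∀ x ∈ Ioo (0 : ℝ) 1, g x (u x) ≤ f x (u x)) : IsSupersolution α δ η g u where
  regular := hu.regular
  le_sturmOp x hx := (mul_le_mul_of_nonneg_left (hgf x hx) (Real.rpow_nonneg hx.1.le α)).trans
    (hu.le_sturmOp x hx)
  boundary_le := hu.boundary_le

theorem IsSubsolution.of_le (hv : IsSubsolution α δ η f v)
    (hfg : ∀ x ∈ Ioo (0 : ℝ) 1, f x (v x) ≤ g x (v x)) : IsSubsolution α δ η g v where
  regular := hv.regular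
  sturmOp_le x hx := (hv.sturmOp_le x hx).trans
    (mul_le_mul_of_nonneg_left (hfg x hx) (Real.rpow_nonneg hx.1.le α))
  le_boundary := hv.le_boundary

theorem IsSubsolution.le_isSupersolution (hv : IsSubsolution α δ η (fun x y => h x - κ * y) v)
    (hu : IsSupersolution α δ η (fun x y => h x - κ * y) u) (hφ : IsPosRadialSolution α κ φ)
    (hα : 0 < α) (hη : η ∈ Icc (0 : ℝ) 1) (hδ : 0 ≤ δ) (hδφ : δ * φ η < φ 1) {x : ℝ}
    (hx : x ∈ Icc (0 : ℝ) 1) : v x ≤ u x := by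
  refine sub_nonneg.1 (hφ.nonneg_of_sturmOp_nonneg (w := u - v) hα hη hδ hδφ
    (hu.regular.sub hv.regular) (fun t ht => ?_) ?_ hx)
  · rw [sturmOp_sub hu.regular hv.regular ht, Pi.sub_apply]
    linarith [hu.le_sturmOp t ht, hv.sturmOp_le t ht]
  · simp only [Pi.sub_apply]
    linarith [hu.boundary_le, hv.le_boundary]

end Comparison

section RadialBessel

/-- The positive radial solution `x ↦ C_{(α-1)/2}((k * x / 2) ^ 2)` with `κ = k ^ 2`, i.e. the
function `x ^ ν * I_{-ν}(k * x)`, `ν = (1 - α) / 2`, up to a constant factor; unlike the latter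
formula it is smooth across `x = 0`. -/
noncomputable def radialBessel (α k x : ℝ) : ℝ :=
  besselClifford ((α - 1) / 2) ((k * x / 2) ^ 2)

variable {α k : ℝ}

theorem hasDerivAt_besselClifford_comp_sq (μ k x : ℝ) :
    HasDerivAt (fun x => besselClifford μ ((k * x / 2) ^ 2))
      (besselClifford (μ + 1) ((k * x / 2) ^ 2) * (k ^ 2 * x / 2)) x := by
  have hinner : HasDerivAt (fun x => (k * x / 2) ^ 2) (k ^ 2 * x / 2) x := by
    refine (((hasDerivAt_const_mul k).div_const 2).pow 2).congr_deriv ?_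
    norm_num
    ring
  exact (hasDerivAt_besselClifford μ _).comp x hinner

theorem deriv_radialBessel : deriv (radialBessel α k) =
    fun x => besselClifford ((α - 1) / 2 + 1) ((k * x / 2) ^ 2) * (k ^ 2 * x / 2) :=
  funext fun x => (hasDerivAt_besselClifford_comp_sq _ k x).deriv

theorem hasDerivAt_deriv_radialBessel (x : ℝ) : HasDerivAt (deriv (radialBessel α k))
    (besselClifford ((α - 1) / 2 + 1 + 1) ((k * x / 2) ^ 2) * (k ^ 2 * x / 2) * (k ^ 2 * x / 2) +
      besselClifford ((α - 1) / 2 + 1) ((k * x / 2) ^ 2) * (k ^ 2 / 2)) x := by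
  rw [deriv_radialBessel]
  exact (hasDerivAt_besselClifford_comp_sq _ k x).mul ((hasDerivAt_const_mul (k ^ 2)).div_const 2)

theorem isPosRadialSolution_radialBessel (hα : -1 < α) (k : ℝ) :
    IsPosRadialSolution α (k ^ 2) (radialBessel α k) where
  differentiable x := (hasDerivAt_besselClifford_comp_sq _ k x).differentiableAt
  differentiable_deriv x := (hasDerivAt_deriv_radialBessel x).differentiableAt
  sturmOp_add_eq_zero x hx := by
    have hpow : x ^ α = x ^ (α - 1) * x := by rw [← Real.rpow_add_one hx.ne', sub_add_cancel]
    rw [sturmOp, (hasDerivAt_deriv_radialBessel x).deriv, deriv_radialBessel, radialBessel,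
      ← besselClifford_recurrence ((α - 1) / 2) ((k * x / 2) ^ 2), hpow]
    ring
  deriv_zero := by simp [deriv_radialBessel]
  pos x := besselClifford_pos (by linarith) (sq_nonneg _)

theorem rpow_mul_besselI_eq {x : ℝ} (hk : 0 < k) (hx : 0 < x) :
    x ^ ((1 - α) / 2) * besselI ((α - 1) / 2) (x * k) =
      (k / 2) ^ ((α - 1) / 2) * radialBessel α k x := by
  rw [besselI_eq_rpow_mul_besselClifford _ (mul_pos hx hk), mul_div_assoc,
    Real.mul_rpow hx.le (by positivity), ← mul_assoc, ← mul_assoc, ← Real.rpow_add hx,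
    show (1 - α) / 2 + (α - 1) / 2 = 0 by ring, Real.rpow_zero, one_mul, radialBessel,
    show x * (k / 2) = k * x / 2 by ring]

theorem mul_radialBessel_lt {δ η : ℝ} (hk : 0 < k) (hη : 0 < η)
    (h : 0 < besselI ((α - 1) / 2) k - δ * η ^ ((1 - α) / 2) * besselI ((α - 1) / 2) (η * k)) :
    δ * radialBessel α k η < radialBessel α k 1 := by
  have hone := rpow_mul_besselI_eq (α := α) hk one_pos
  rw [Real.one_rpow, one_mul, one_mul] at hone
  rw [mul_assoc, rpow_mul_besselI_eq hk hη, hone, mul_left_comm, ← mul_sub] at h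
  exact sub_pos.1 (pos_of_mul_pos_right h (by positivity))

end RadialBessel

section LinearSolution

/-- The function `s ↦ (s ^ α * φ s ^ 2)⁻¹ * ∫ t in 0..s, t ^ α * φ t * h t`, which is `-(y / φ)'`
for the solution `y` of the linear problem with right-hand side `h`. The substitution `t = s * r`
makes it visibly continuous at `s = 0`. -/
noncomputable def fluxQuotient (α : ℝ) (φ h : ℝ → ℝ) (s : ℝ) : ℝ :=
  s / φ s ^ 2 * ∫ r in (0 : ℝ)..1, r ^ α * φ (s * r) * h (s * r)

/-- The primitive of `-fluxQuotient α φ h` that vanishes at `1`. -/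
noncomputable def fluxPotential (α : ℝ) (φ h : ℝ → ℝ) (x : ℝ) : ℝ :=
  ∫ s in x..1, fluxQuotient α φ h s

/-- The solution of the linear problem `-(x ^ α * y')' + κ * x ^ α * y = x ^ α * h`, `y'(0) = 0`,
`y(1) = δ * y(η)`, obtained by reduction of order from a positive radial solution `φ`. The
additive constant is the one that enforces the three-point condition. -/
noncomputable def linearSolution (α δ η : ℝ) (φ h : ℝ → ℝ) (x : ℝ) : ℝ :=
  φ x * (δ * φ η * fluxPotential α φ h η / (φ 1 - δ * φ η) + fluxPotential α φ h x)

section Continuity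

variable {Z : Type*} [TopologicalSpace Z] {α : ℝ} {φ : ℝ → ℝ}
  {h : Z → ℝ → ℝ}

theorem continuous_uncurry_fluxQuotient (hα : 0 ≤ α) (hφ : Continuous φ) (hpos : ∀ x, 0 < φ x)
    (hh : Continuous (uncurry h)) : Continuous (uncurry fun z => fluxQuotient α φ (h z)) := by
  have hintegrand : Continuous (uncurry fun (p : Z × ℝ) (r : ℝ) =>
      r ^ α * φ (p.2 * r) * h p.1 (p.2 * r)) := by
    have hmul : Continuous fun p : (Z × ℝ) × ℝ => p.1.2 * p.2 := by fun_prop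
    exact (((Real.continuous_rpow_const hα).comp continuous_snd).mul (hφ.comp hmul)).mul
      (hh.comp ((continuous_fst.comp continuous_fst).prodMk hmul))
  exact (continuous_snd.div ((hφ.comp continuous_snd).pow 2)
      fun p => pow_ne_zero 2 (hpos p.2).ne').mul
    (intervalIntegral.continuous_parametric_intervalIntegral_of_continuous' hintegrand 0 1)

theorem continuous_uncurry_fluxPotential (hα : 0 ≤ α) (hφ : Continuous φ) (hpos : ∀ x, 0 < φ x)
    (hh : Continuous (uncurry h)) : Continuous (uncurry fun z => fluxPotential α φ (h z)) := by
  have hflux := continuous_uncurry_fluxQuotient hα hφ hpos hh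
  have hsymm : (uncurry fun z => fluxPotential α φ (h z)) =
      fun p => -∫ s in (1 : ℝ)..p.2, fluxQuotient α φ (h p.1) s :=
    funext fun p => intervalIntegral.integral_symm _ _
  rw [hsymm]
  exact (intervalIntegral.continuous_parametric_intervalIntegral_of_continuous
    (f := fun p : Z × ℝ => fluxQuotient α φ (h p.1))
    (hflux.comp ((continuous_fst.comp continuous_fst).prodMk continuous_snd))
    continuous_snd).neg

theorem continuous_uncurry_linearSolution (δ η : ℝ) (hα : 0 ≤ α) (hφ : Continuous φ)
    (hpos : ∀ x, 0 < φ x) (hh : Continuous (uncurry h)) :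
    Continuous (uncurry fun z => linearSolution α δ η φ (h z)) := by
  have hpot := continuous_uncurry_fluxPotential hα hφ hpos hh
  have hpotη : Continuous fun p : Z × ℝ => fluxPotential α φ (h p.1) η :=
    hpot.comp (continuous_fst.prodMk continuous_const)
  exact (hφ.comp continuous_snd).mul (((continuous_const.mul hpotη).div_const _).add hpot)

end Continuity

variable {α κ δ η : ℝ} {φ h : ℝ → ℝ} {x : ℝ}

theorem continuous_fluxQuotient (hα : 0 ≤ α) (hφ : Continuous φ) (hpos : ∀ x, 0 < φ x)
    (hh : Continuous h) : Continuous (fluxQuotient α φ h) :=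
  (continuous_uncurry_fluxQuotient (Z := Unit) (h := fun _ => h) hα hφ hpos
    (hh.comp continuous_snd)).comp (Continuous.prodMk_right ())

theorem rpow_mul_sq_mul_fluxQuotient (hx : 0 < x) (hφx : φ x ≠ 0) :
    x ^ α * φ x ^ 2 * fluxQuotient α φ h x = ∫ t in (0 : ℝ)..x, t ^ α * φ t * h t := by
  have hsubst := intervalIntegral.mul_integral_comp_mul_left (a := 0) (b := 1)
    (f := fun t => t ^ α * φ t * h t) x
  have hscale : ∫ r in (0 : ℝ)..1, (x * r) ^ α * φ (x * r) * h (x * r) =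
      x ^ α * ∫ r in (0 : ℝ)..1, r ^ α * φ (x * r) * h (x * r) := by
    rw [← intervalIntegral.integral_const_mul]
    refine intervalIntegral.integral_congr fun r hr => ?_
    rw [uIcc_of_le zero_le_one] at hr
    simp only [Real.mul_rpow hx.le hr.1, mul_assoc]
  rw [mul_zero, mul_one, hscale] at hsubst
  rw [← hsubst, fluxQuotient]
  field_simp

theorem hasDerivAt_integral_rpow_mul (hα : 0 ≤ α) (hφ : Continuous φ) (hh : Continuous h) :
    HasDerivAt (fun x => ∫ t in (0 : ℝ)..x, t ^ α * φ t * h t) (x ^ α * φ x * h x) x :=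
  (((Real.continuous_rpow_const hα).mul hφ).mul hh).integral_hasStrictDerivAt 0 x |>.hasDerivAt

namespace IsPosRadialSolution

theorem differentiableAt_fluxQuotient (hφ : IsPosRadialSolution α κ φ) (hα : 0 ≤ α)
    (hh : Continuous h) (hx : 0 < x) : DifferentiableAt ℝ (fluxQuotient α φ h) x := by
  have hquot : fluxQuotient α φ h =ᶠ[𝓝 x]
      fun t => (∫ s in (0 : ℝ)..t, s ^ α * φ s * h s) / (t ^ α * φ t ^ 2) := by
    filter_upwards [lt_mem_nhds hx] with t ht
    have hweight : t ^ α * φ t ^ 2 ≠ 0 :=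
      (mul_pos (Real.rpow_pos_of_pos ht α) (pow_pos (hφ.pos t) 2)).ne'
    rw [eq_div_iff hweight, mul_comm, rpow_mul_sq_mul_fluxQuotient ht (hφ.pos t).ne']
  refine DifferentiableAt.congr_of_eventuallyEq ?_ hquot
  exact (hasDerivAt_integral_rpow_mul hα hφ.continuous hh).differentiableAt.div
    ((Real.hasDerivAt_rpow_const (Or.inl hx.ne')).differentiableAt.mul
      ((hφ.differentiable x).pow 2))
    (mul_pos (Real.rpow_pos_of_pos hx α) (pow_pos (hφ.pos x) 2)).ne'

theorem hasDerivAt_linearSolution (hφ : IsPosRadialSolution α κ φ) (hα : 0 ≤ α)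
    (hh : Continuous h) (x : ℝ) : HasDerivAt (linearSolution α δ η φ h)
      (deriv φ x / φ x * linearSolution α δ η φ h x - φ x * fluxQuotient α φ h x) x := by
  have hflux := continuous_fluxQuotient hα hφ.continuous hφ.pos hh
  have hpot : HasDerivAt (fluxPotential α φ h) (-fluxQuotient α φ h x) x :=
    intervalIntegral.integral_hasDerivAt_left (hflux.intervalIntegrable _ _)
      (hflux.stronglyMeasurableAtFilter _ _) hflux.continuousAt
  refine ((hφ.differentiable x).hasDerivAt.mul (hpot.const_add _)).congr_deriv ?_
  have := (hφ.pos x).ne'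
  rw [linearSolution]
  field_simp
  ring

theorem deriv_linearSolution (hφ : IsPosRadialSolution α κ φ) (hα : 0 ≤ α) (hh : Continuous h) :
    deriv (linearSolution α δ η φ h) = fun x =>
      deriv φ x / φ x * linearSolution α δ η φ h x - φ x * fluxQuotient α φ h x :=
  funext fun x => (hφ.hasDerivAt_linearSolution hα hh x).deriv

theorem isBVPRegular_linearSolution (hφ : IsPosRadialSolution α κ φ) (hα : 0 ≤ α)
    (hh : Continuous h) : IsBVPRegular (linearSolution α δ η φ h) where
  differentiableAt x _ := (hφ.hasDerivAt_linearSolution hα hh x).differentiableAt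
  continuousOn_deriv := by
    have hlin : Continuous (linearSolution α δ η φ h) := continuous_iff_continuousAt.2 fun x =>
      (hφ.hasDerivAt_linearSolution hα hh x).continuousAt
    rw [hφ.deriv_linearSolution hα hh]
    exact (((hφ.differentiable_deriv.continuous.div hφ.continuous fun x => (hφ.pos x).ne').mul
      hlin).sub (hφ.continuous.mul
        (continuous_fluxQuotient hα hφ.continuous hφ.pos hh))).continuousOn
  differentiableAt_deriv x hx := by
    rw [hφ.deriv_linearSolution hα hh]
    exact (((hφ.differentiable_deriv x).div (hφ.differentiable x) (hφ.pos x).ne').mul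
      (hφ.hasDerivAt_linearSolution hα hh x).differentiableAt).sub
        ((hφ.differentiable x).mul (hφ.differentiableAt_fluxQuotient hα hh hx.1))

theorem weightedWronskian_linearSolution (hφ : IsPosRadialSolution α κ φ) (hα : 0 ≤ α)
    (hh : Continuous h) (hx : 0 < x) : weightedWronskian α φ (linearSolution α δ η φ h) x =
      -∫ t in (0 : ℝ)..x, t ^ α * φ t * h t := by
  have := (hφ.pos x).ne'
  rw [← rpow_mul_sq_mul_fluxQuotient hx this, weightedWronskian, hφ.deriv_linearSolution hα hh]
  field_simp
  ring

/-- Both sides, multiplied by `-φ x`, are the derivative of the weighted Wronskian of `φ` and the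
linear solution. -/
theorem sturmOp_linearSolution (hφ : IsPosRadialSolution α κ φ) (hα : 0 ≤ α) (hh : Continuous h)
    (hx : x ∈ Ioo (0 : ℝ) 1) : sturmOp α (linearSolution α δ η φ h) x +
      κ * x ^ α * linearSolution α δ η φ h x = x ^ α * h x := by
  have hreg : IsBVPRegular (linearSolution α δ η φ h) := hφ.isBVPRegular_linearSolution hα hh
  have hlagrange := hφ.hasDerivAt_weightedWronskian hx.1
    (hreg.differentiableAt x (Ioo_subset_Icc_self hx)) (hreg.differentiableAt_deriv x hx)
  have hprimitive := (hasDerivAt_integral_rpow_mul (x := x) hα hφ.continuous hh).neg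
  have hlocal : weightedWronskian α φ (linearSolution α δ η φ h) =ᶠ[𝓝 x]
      -fun x => ∫ t in (0 : ℝ)..x, t ^ α * φ t * h t :=
    (lt_mem_nhds hx.1).mono fun t ht => hφ.weightedWronskian_linearSolution hα hh ht
  have heq := neg_injective (hlagrange.unique (hprimitive.congr_of_eventuallyEq hlocal))
  exact mul_left_cancel₀ (hφ.pos x).ne' (heq.trans (by ring))

theorem isBVPSolution_linearSolution (hφ : IsPosRadialSolution α κ φ) (hα : 0 ≤ α)
    (hδφ : δ * φ η < φ 1) (hh : Continuous h) :
    IsBVPSolution α δ η (fun x y => h x - κ * y) (linearSolution α δ η φ h) := by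
  have hreg : IsBVPRegular (linearSolution α δ η φ h) := hφ.isBVPRegular_linearSolution hα hh
  refine ⟨hreg.continuousOn, hreg.differentiableAt, hreg.continuousOn_deriv,
    hreg.differentiableAt_deriv, fun x hx => ?_, ?_, ?_⟩
  · change sturmOp α (linearSolution α δ η φ h) x = _
    linear_combination hφ.sturmOp_linearSolution hα hh hx
  · simp [hφ.deriv_linearSolution hα hh, hφ.deriv_zero, fluxQuotient]
  · have hone : fluxPotential α φ h 1 = 0 := intervalIntegral.integral_same
    have hne : φ 1 - δ * φ η ≠ 0 := (sub_pos.2 hδφ).ne'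
    rw [linearSolution, linearSolution, hone]
    field_simp
    ring

end IsPosRadialSolution

end LinearSolution

section LinearSolutionMap

variable {α κ δ η : ℝ} {f : ℝ → ℝ → ℝ} {φ h u v : ℝ → ℝ} {B C : ℝ≥0}

theorem abs_fluxQuotient_le {s : ℝ} (hα : 0 ≤ α) (hφ : Continuous φ) (hpos : ∀ x, 0 < φ x)
    (hh : ∀ t ∈ Icc (0 : ℝ) 1, |h t| ≤ B) (hs : s ∈ Icc (0 : ℝ) 1) :
    |fluxQuotient α φ h s| ≤ B * fluxQuotient α φ (fun _ => 1) s := by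
  have hcoeff : 0 ≤ s / φ s ^ 2 := div_nonneg hs.1 (sq_nonneg _)
  have hint : Continuous fun r : ℝ => (B : ℝ) * (r ^ α * φ (s * r) * 1) :=
    (((Real.continuous_rpow_const hα).mul (hφ.comp (continuous_const_mul s))).mul
      continuous_const).const_mul _
  have hintegral : |∫ r in (0 : ℝ)..1, r ^ α * φ (s * r) * h (s * r)| ≤
      ∫ r in (0 : ℝ)..1, (B : ℝ) * (r ^ α * φ (s * r) * 1) := by
    refine intervalIntegral.norm_integral_le_of_norm_le (E := ℝ) zero_le_one
      (MeasureTheory.ae_of_all MeasureTheory.volume fun r hr => ?_) (hint.intervalIntegrable 0 1)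
    have hweight : 0 ≤ r ^ α * φ (s * r) :=
      mul_nonneg (Real.rpow_nonneg hr.1.le α) (hpos _).le
    rw [norm_mul, Real.norm_of_nonneg hweight, mul_one, mul_comm (B : ℝ)]
    exact mul_le_mul_of_nonneg_left
      (hh _ ⟨mul_nonneg hs.1 hr.1.le, mul_le_one₀ hs.2 hr.1.le hr.2⟩) hweight
  rw [fluxQuotient, fluxQuotient, abs_mul, abs_of_nonneg hcoeff, mul_left_comm,
    ← intervalIntegral.integral_const_mul]
  exact mul_le_mul_of_nonneg_left hintegral hcoeff

theorem exists_forall_abs_fluxQuotient_le (hα : 0 ≤ α) (hφ : Continuous φ) (hpos : ∀ x, 0 < φ x)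
    (B : ℝ≥0) : ∃ C : ℝ≥0, ∀ h : ℝ → ℝ, (∀ t ∈ Icc (0 : ℝ) 1, |h t| ≤ B) →
      ∀ s ∈ Icc (0 : ℝ) 1, |fluxQuotient α φ h s| ≤ C := by
  obtain ⟨C, hC⟩ := isCompact_Icc.exists_bound_of_continuousOn
    (continuous_fluxQuotient (h := fun _ => 1) hα hφ hpos continuous_const).continuousOn
  refine ⟨B * C.toNNReal, fun h hh s hs => (abs_fluxQuotient_le hα hφ hpos hh hs).trans ?_⟩
  rw [NNReal.coe_mul]
  gcongr
  exact (le_abs_self _).trans ((hC s hs).trans (Real.le_coe_toNNReal C))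

theorem lipschitzOnWith_fluxPotential (hflux : Continuous (fluxQuotient α φ h))
    (hC : ∀ s ∈ Icc (0 : ℝ) 1, |fluxQuotient α φ h s| ≤ C) :
    LipschitzOnWith C (fluxPotential α φ h) (Icc 0 1) := by
  refine .of_dist_le_mul fun x hx y hy => ?_
  have hsub : fluxPotential α φ h x - fluxPotential α φ h y =
      ∫ s in x..y, fluxQuotient α φ h s :=
    sub_eq_of_eq_add (intervalIntegral.integral_add_adjacent_intervals
      (hflux.intervalIntegrable _ _) (hflux.intervalIntegrable _ _)).symm
  rw [Real.dist_eq, Real.dist_eq, abs_sub_comm x, hsub]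
  exact intervalIntegral.norm_integral_le_of_norm_le_const (f := fluxQuotient α φ h) fun s hs =>
    hC s (uIcc_subset_Icc hx hy (uIoc_subset_uIcc hs))

theorem abs_fluxPotential_le (hlip : LipschitzOnWith C (fluxPotential α φ h) (Icc 0 1)) {x : ℝ}
    (hx : x ∈ Icc (0 : ℝ) 1) : |fluxPotential α φ h x| ≤ C := by
  have hone : fluxPotential α φ h 1 = 0 := intervalIntegral.integral_same
  have hdist := hlip.dist_le_mul x hx 1 (right_mem_Icc.2 zero_le_one)
  rw [hone, Real.dist_eq, Real.dist_eq, sub_zero] at hdist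
  refine hdist.trans (mul_le_of_le_one_right C.2 ?_)
  rw [abs_le]
  constructor <;> linarith [hx.1, hx.2]

namespace IsPosRadialSolution

/-- `linearSolution` as a continuous operator on `C([0, 1])`; right-hand sides are extended to `ℝ`
by their boundary values. -/
noncomputable def linearSolutionMap (hφ : IsPosRadialSolution α κ φ) (hα : 0 ≤ α) (δ η : ℝ) :
    C(C(I, ℝ), C(I, ℝ)) :=
  ContinuousMap.curry
    ⟨fun p => linearSolution α δ η φ (IccExtend zero_le_one p.1) p.2,
      (continuous_uncurry_linearSolution (h := fun h : C(I, ℝ) => IccExtend zero_le_one h) δ η hα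
        hφ.continuous hφ.pos
        (by simp only [uncurry_def, IccExtend, comp_def]; fun_prop)).comp
          (continuous_fst.prodMk (continuous_subtype_val.comp continuous_snd))⟩

/-- Dividing by `φ` leaves a family that is uniformly Lipschitz and bounded, so Arzelà–Ascoli
applies. -/
theorem exists_isCompact_forall_linearSolutionMap_mem (hφ : IsPosRadialSolution α κ φ)
    (hα : 0 ≤ α) (hη : η ∈ Icc (0 : ℝ) 1) (B : ℝ≥0) :
    ∃ K : Set C(I, ℝ), IsCompact K ∧
      ∀ h : C(I, ℝ), ‖h‖ ≤ B → hφ.linearSolutionMap hα δ η h ∈ K := by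
  obtain ⟨C, hC⟩ := exists_forall_abs_fluxQuotient_le hα hφ.continuous hφ.pos B
  let φI : C(I, ℝ) := ⟨fun t => φ t, hφ.continuous.comp continuous_subtype_val⟩
  refine ⟨(φI * ·) '' {w | LipschitzWith C w ∧
      ∀ t, |w t| ≤ |δ * φ η / (φ 1 - δ * φ η)| * C + C},
    (isCompact_setOf_lipschitzWith_abs_le C _).image (continuous_const_mul φI), fun h hh => ?_⟩
  set hext := IccExtend zero_le_one h
  have hflux : Continuous (fluxQuotient α φ hext) :=
    continuous_fluxQuotient hα hφ.continuous hφ.pos h.continuous.Icc_extend'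
  have hlip := lipschitzOnWith_fluxPotential hflux
    (hC hext fun t _ => (h.norm_coe_le_norm _).trans hh)
  have hw : LipschitzWith C fun t : I =>
      δ * φ η * fluxPotential α φ hext η / (φ 1 - δ * φ η) + fluxPotential α φ hext t := by
    simpa using (LipschitzWith.const _).add hlip.to_restrict
  refine ⟨⟨_, hw.continuous⟩, ⟨hw, fun t => (abs_add_le _ _).trans ?_⟩, rfl⟩
  rw [mul_div_right_comm, abs_mul]
  exact add_le_add (mul_le_mul_of_nonneg_left (abs_fluxPotential_le hlip hη) (abs_nonneg _))
    (abs_fluxPotential_le hlip t.2)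

theorem linearSolutionMap_apply_le (hφ : IsPosRadialSolution α κ φ) (hα : 0 < α)
    (hη : η ∈ Icc (0 : ℝ) 1) (hδ : 0 ≤ δ) (hδφ : δ * φ η < φ 1) (hu : IsSupersolution α δ η f u)
    {h : C(I, ℝ)} (hh : ∀ t : I, h t ≤ f t (u t) + κ * u t) (t : I) :
    hφ.linearSolutionMap hα.le δ η h t ≤ u t := by
  have hlin := hφ.isBVPSolution_linearSolution hα.le hδφ
    (h.continuous.Icc_extend' (h := zero_le_one))
  refine hlin.isSubsolution.le_isSupersolution (hu.of_le fun x hx => ?_) hφ hα hη hδ hδφ t.2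
  have hx' := Ioo_subset_Icc_self hx
  rw [IccExtend_of_mem _ _ hx']
  exact sub_le_iff_le_add.2 (hh ⟨x, hx'⟩)

theorem le_linearSolutionMap_apply (hφ : IsPosRadialSolution α κ φ) (hα : 0 < α)
    (hη : η ∈ Icc (0 : ℝ) 1) (hδ : 0 ≤ δ) (hδφ : δ * φ η < φ 1) (hv : IsSubsolution α δ η f v)
    {h : C(I, ℝ)} (hh : ∀ t : I, f t (v t) + κ * v t ≤ h t) (t : I) :
    v t ≤ hφ.linearSolutionMap hα.le δ η h t := by
  have hlin := hφ.isBVPSolution_linearSolution hα.le hδφ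
    (h.continuous.Icc_extend' (h := zero_le_one))
  refine IsSubsolution.le_isSupersolution (hv.of_le fun x hx => ?_) hlin.isSupersolution
    hφ hα hη hδ hδφ t.2
  have hx' := Ioo_subset_Icc_self hx
  rw [IccExtend_of_mem _ _ hx']
  exact le_sub_iff_add_le.2 (hh ⟨x, hx'⟩)

theorem monotone_linearSolutionMap (hφ : IsPosRadialSolution α κ φ) (hα : 0 < α)
    (hη : η ∈ Icc (0 : ℝ) 1) (hδ : 0 ≤ δ) (hδφ : δ * φ η < φ 1) :
    Monotone (hφ.linearSolutionMap hα.le δ η) := fun h₁ h₂ hle => by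
  have hlin := hφ.isBVPSolution_linearSolution hα.le hδφ
    (h₂.continuous.Icc_extend' (h := zero_le_one))
  refine hφ.linearSolutionMap_apply_le hα hη hδ hδφ hlin.isSupersolution fun t => ?_
  rw [IccExtend_val, sub_add_cancel]
  exact hle t

theorem exists_isBVPSolution_of_linearSolutionMap_eq (hφ : IsPosRadialSolution α κ φ) (hα : 0 ≤ α)
    (hδφ : δ * φ η < φ 1) {h y : C(I, ℝ)} (hy : hφ.linearSolutionMap hα δ η h = y)
    (hh : ∀ t : I, h t = f t (y t) + κ * y t) :
    ∃ z : ℝ → ℝ, IsBVPSolution α δ η f z ∧ ∀ t : I, z t = y t := by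
  subst hy
  obtain ⟨hcont, hdiff, hcont', hdiff', heq, hzero, hbc⟩ :=
    hφ.isBVPSolution_linearSolution hα hδφ (h.continuous.Icc_extend' (h := zero_le_one))
  refine ⟨_, ⟨hcont, hdiff, hcont', hdiff', fun x hx => (heq x hx).trans ?_, hzero, hbc⟩,
    fun t => rfl⟩
  have hx' := Ioo_subset_Icc_self hx
  simp only [IccExtend_of_mem _ _ hx']
  exact congrArg (x ^ α * ·) (sub_eq_of_eq_add (hh ⟨x, hx'⟩))

theorem linearSolutionMap_eq_of_isBVPSolution (hφ : IsPosRadialSolution α κ φ) (hα : 0 < α)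
    (hη : η ∈ Icc (0 : ℝ) 1) (hδ : 0 ≤ δ) (hδφ : δ * φ η < φ 1) {h z : C(I, ℝ)} {y : ℝ → ℝ}
    (hy : IsBVPSolution α δ η f y) (hyz : ∀ t : I, y t = z t)
    (hh : ∀ t : I, h t = f t (z t) + κ * z t) : hφ.linearSolutionMap hα.le δ η h = z := by
  ext t
  simp only [← hyz] at hh ⊢
  exact le_antisymm
    (hφ.linearSolutionMap_apply_le hα hη hδ hδφ hy.isSupersolution (fun t => (hh t).le) t)
    (hφ.le_linearSolutionMap_apply hα hη hδ hδφ hy.isSubsolution (fun t => (hh t).ge) t)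

end IsPosRadialSolution

end LinearSolutionMap

section TruncatedSuperposition

variable {X : Type*} [TopologicalSpace X] [CompactSpace X] {a b : C(X, ℝ)} {g : X → ℝ → ℝ}

/-- The operator is `y ↦ g x (max (a x) (min (b x) (y x)))`. -/
theorem exists_monotone_truncated_superposition (hab : a ≤ b)
    (hcont : ContinuousOn (uncurry g) {p | p.2 ∈ Icc (a p.1) (b p.1)})
    (hmono : ∀ x, MonotoneOn (g x) (Icc (a x) (b x))) :
    ∃ N : C(X, ℝ) → C(X, ℝ), Continuous N ∧ Monotone N ∧ (∃ B : ℝ≥0, ∀ y, ‖N y‖ ≤ B) ∧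
      ∀ y, a ≤ y → y ≤ b → ∀ x, N y x = g x (y x) := by
  let clamp (x : X) (r : ℝ) : ℝ := max (a x) (min (b x) r)
  have hclamp_mem (x r) : clamp x r ∈ Icc (a x) (b x) :=
    ⟨le_max_left _ _, max_le (hab x) (min_le_left _ _)⟩
  have hclamp_eq {x r} (hr : r ∈ Icc (a x) (b x)) : clamp x r = r := by
    simp only [clamp, min_eq_right hr.2, max_eq_right hr.1]
  have hclamp_mono (x) : Monotone (clamp x) :=
    monotone_const.max (monotone_const.min monotone_id)
  have hjoint : Continuous fun p : C(X, ℝ) × X => g p.2 (clamp p.2 (p.1 p.2)) :=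
    hcont.comp_continuous (f := fun p : C(X, ℝ) × X => (p.2, clamp p.2 (p.1 p.2)))
      (by fun_prop) fun p => hclamp_mem _ _
  let N : C(C(X, ℝ), C(X, ℝ)) := ContinuousMap.curry ⟨_, hjoint⟩
  have hN (y x) : N y x = g x (clamp x (y x)) := rfl
  have hN_mono : Monotone N := fun y z hyz x =>
    hmono x (hclamp_mem _ _) (hclamp_mem _ _) (hclamp_mono x (hyz x))
  have hN_eq (y : C(X, ℝ)) (hay : a ≤ y) (hyb : y ≤ b) (x) : N y x = g x (y x) :=
    congrArg (g x) (hclamp_eq ⟨hay x, hyb x⟩)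
  refine ⟨N, N.continuous, hN_mono, ⟨max ‖N a‖₊ ‖N b‖₊, fun y => ?_⟩, hN_eq⟩
  refine (ContinuousMap.norm_le _ (NNReal.coe_nonneg _)).2 fun x => ?_
  have hlow : N a x ≤ N y x := by
    rw [hN_eq a le_rfl hab, hN]
    exact hmono x ⟨le_rfl, hab x⟩ (hclamp_mem _ _) (hclamp_mem _ _).1
  have hupp : N y x ≤ N b x := by
    rw [hN_eq b hab le_rfl, hN]
    exact hmono x (hclamp_mem _ _) ⟨hab x, le_rfl⟩ (hclamp_mem _ _).2
  exact (abs_le_max_abs_abs hlow hupp).trans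
    (max_le_max ((N a).norm_coe_le_norm x) ((N b).norm_coe_le_norm x))

end TruncatedSuperposition

section ExtremalSolutions

variable {α κ δ η : ℝ} {f : ℝ → ℝ → ℝ} {φ u₀ v₀ : ℝ → ℝ}

theorem IsPosRadialSolution.exists_extremal_solutions (hφ : IsPosRadialSolution α κ φ) (hα : 0 < α)
    (hη : η ∈ Icc (0 : ℝ) 1) (hδ : 0 ≤ δ) (hδφ : δ * φ η < φ 1)
    (hu₀ : IsSupersolution α δ η f u₀) (hv₀ : IsSubsolution α δ η f v₀)
    (horder : ∀ x ∈ Icc (0 : ℝ) 1, v₀ x ≤ u₀ x)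
    (hfcont : ContinuousOn (uncurry f) {p | p.1 ∈ Icc (0 : ℝ) 1 ∧ v₀ p.1 ≤ p.2 ∧ p.2 ≤ u₀ p.1})
    (hmono : ∀ x ∈ Icc (0 : ℝ) 1, MonotoneOn (fun y => f x y + κ * y) (Icc (v₀ x) (u₀ x))) :
    ∃ v u : ℝ → ℝ, IsBVPSolution α δ η f v ∧ IsBVPSolution α δ η f u ∧
      (∀ x ∈ Icc (0 : ℝ) 1, v₀ x ≤ v x ∧ v x ≤ u x ∧ u x ≤ u₀ x) ∧
      ∀ z : ℝ → ℝ, IsBVPSolution α δ η f z →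
        (∀ x ∈ Icc (0 : ℝ) 1, v₀ x ≤ z x ∧ z x ≤ u₀ x) →
        ∀ x ∈ Icc (0 : ℝ) 1, v x ≤ z x ∧ z x ≤ u x := by
  let a : C(I, ℝ) := ⟨_, hv₀.regular.continuousOn.domRestrict⟩
  let b : C(I, ℝ) := ⟨_, hu₀.regular.continuousOn.domRestrict⟩
  have hab : a ≤ b := fun t => horder t t.2
  have hgcont : ContinuousOn (uncurry fun (t : I) y => f t y + κ * y)
      {p | p.2 ∈ Icc (a p.1) (b p.1)} :=
    (hfcont.comp (f := fun p : I × ℝ => ((p.1 : ℝ), p.2)) (by fun_prop)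
      fun p hp => ⟨p.1.2, hp⟩).add (by fun_prop)
  obtain ⟨N, hNcont, hNmono, ⟨B, hB⟩, hN⟩ :=
    exists_monotone_truncated_superposition hab hgcont fun t => hmono t t.2
  obtain ⟨K, hK, hTK⟩ := hφ.exists_isCompact_forall_linearSolutionMap_mem (δ := δ) hα.le hη B
  let S (y : C(I, ℝ)) : C(I, ℝ) := hφ.linearSolutionMap hα.le δ η (N y)
  have hSmono : Monotone S := (hφ.monotone_linearSolutionMap hα hη hδ hδφ).comp hNmono
  have hScont : Continuous S := (hφ.linearSolutionMap hα.le δ η).continuous.comp hNcont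
  have hSK (y) : S y ∈ K := hTK _ (hB y)
  have haS : a ≤ S a :=
    hφ.le_linearSolutionMap_apply hα hη hδ hδφ hv₀ fun t => (hN a le_rfl hab t).ge
  have hSb : S b ≤ b :=
    hφ.linearSolutionMap_apply_le hα hη hδ hδφ hu₀ fun t => (hN b hab le_rfl t).le
  obtain ⟨p, q, hSp, hSq, hap, hpq, hqb, hextremal⟩ :=
    exists_extremal_fixedPoints_of_monotone hSmono hScont hK hSK hab haS hSb
  obtain ⟨v, hv, hvp⟩ :=
    hφ.exists_isBVPSolution_of_linearSolutionMap_eq hα.le hδφ hSp (hN p hap (hpq.trans hqb))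
  obtain ⟨u, hu, huq⟩ :=
    hφ.exists_isBVPSolution_of_linearSolutionMap_eq hα.le hδφ hSq (hN q (hap.trans hpq) hqb)
  refine ⟨v, u, hv, hu, fun x hx => ?_, fun z hz hz₀ x hx => ?_⟩
  · rw [hvp ⟨x, hx⟩, huq ⟨x, hx⟩]
    exact ⟨hap ⟨x, hx⟩, hpq ⟨x, hx⟩, hqb ⟨x, hx⟩⟩
  · let c : C(I, ℝ) := ⟨_, hz.1.domRestrict⟩
    have hac : a ≤ c := fun t => (hz₀ t t.2).1
    have hcb : c ≤ b := fun t => (hz₀ t t.2).2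
    have hSc : S c = c := hφ.linearSolutionMap_eq_of_isBVPSolution hα hη hδ hδφ hz (fun _ => rfl)
      (hN c hac hcb)
    have hpcq := hextremal c hSc hac hcb
    rw [hvp ⟨x, hx⟩, huq ⟨x, hx⟩]
    exact ⟨hpcq.1 ⟨x, hx⟩, hpcq.2 ⟨x, hx⟩⟩

end ExtremalSolutions

theorem existence_well_ordered_neg_lambda_general (α lam δ η ν : ℝ) (hα : 0 < α)
    (hν : ν = (1 - α) / 2) (hη : η ∈ Ioc (0 : ℝ) 1) (hlam : lam < 0) (hδ : 0 ≤ δ)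
    (hH2 : 0 < besselI (-ν) (√|lam|) - δ * η ^ ν * besselI (-ν) (η * √|lam|))
    (f : ℝ → ℝ → ℝ) (u₀ v₀ : ℝ → ℝ)
    (hu₀ : IsSupersolution α δ η f u₀) (hv₀ : IsSubsolution α δ η f v₀)
    (horder : ∀ x ∈ Icc (0 : ℝ) 1, v₀ x ≤ u₀ x)
    (hfcont : ContinuousOn (uncurry f) {p | p.1 ∈ Icc (0 : ℝ) 1 ∧ v₀ p.1 ≤ p.2 ∧ p.2 ≤ u₀ p.1})
    (hmono : ∀ x ∈ Icc (0 : ℝ) 1, MonotoneOn (fun y => f x y - lam * y) (Icc (v₀ x) (u₀ x))) :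
    ∃ v u : ℝ → ℝ, IsBVPSolution α δ η f v ∧ IsBVPSolution α δ η f u ∧
      (∀ x ∈ Icc (0 : ℝ) 1, v₀ x ≤ v x ∧ v x ≤ u x ∧ u x ≤ u₀ x) ∧
      ∀ z : ℝ → ℝ, IsBVPSolution α δ η f z →
        (∀ x ∈ Icc (0 : ℝ) 1, v₀ x ≤ z x ∧ z x ≤ u₀ x) →
        ∀ x ∈ Icc (0 : ℝ) 1, v x ≤ z x ∧ z x ≤ u x := by
  have hsq : √|lam| ^ 2 = -lam := by rw [Real.sq_sqrt (abs_nonneg lam), abs_of_neg hlam]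
  have hneg : -ν = (α - 1) / 2 := by rw [hν]; ring
  have hφ : IsPosRadialSolution α (-lam) (radialBessel α √|lam|) :=
    hsq ▸ isPosRadialSolution_radialBessel (by linarith) _
  have hδφ : δ * radialBessel α √|lam| η < radialBessel α √|lam| 1 :=
    mul_radialBessel_lt (Real.sqrt_pos.2 (abs_pos.2 hlam.ne)) hη.1 (hneg ▸ hν ▸ hH2)
  refine hφ.exists_extremal_solutions hα (Ioc_subset_Icc_self hη) hδ hδφ hu₀ hv₀ horder hfcont ?_
  simpa only [neg_mul, ← sub_eq_add_neg] using hmono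

/-- **Theorem 5.3 (existence, well-ordered case, negative `λ`).**
For `α ≥ 1`, `ν = (1−α)/2`, `0 < η < 1`, `λ < 0`, with `δ` satisfying `(H₀')`,
an upper solution `u₀` and lower solution `v₀` with `v₀ ≤ u₀`, `f` continuous
on `D₂ = {(x,y) : x ∈ [0,1], v₀(x) ≤ y ≤ u₀(x)}` and one-sided Lipschitz from
below with constant `−M₃`, `M₃ ≥ 0`, `M₃ + λ ≤ 0`: there are solutions `v, u`
with `v₀ ≤ v ≤ u ≤ u₀`, and every solution `z` in `D₂` satisfies `v ≤ z ≤ u`. -/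
theorem existence_well_ordered_neg_lambda (α lam δ η ν : ℝ) (hα : 1 ≤ α)
    (hν : ν = (1 - α) / 2)
    (hη0 : 0 < η) (hη1 : η < 1)
    (hlam : lam < 0) (hδ : 0 < δ)
    (hH1 : besselK ν (Real.sqrt |lam|)
        - δ * η ^ ν * besselK ν (η * Real.sqrt |lam|) ≤ 0)
    (hH2 : 0 < besselI (-ν) (Real.sqrt |lam|)
        - δ * η ^ ν * besselI (-ν) (η * Real.sqrt |lam|))
    (f : ℝ → ℝ → ℝ) (u₀ v₀ : ℝ → ℝ)
    (hu₀ : IsUpperSolution α δ η f u₀) (hv₀ : IsLowerSolution α δ η f v₀)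
    (horder : ∀ x ∈ Set.Icc (0 : ℝ) 1, v₀ x ≤ u₀ x)
    (hfcont : ContinuousOn (fun p : ℝ × ℝ => f p.1 p.2)
      {p : ℝ × ℝ | p.1 ∈ Set.Icc (0 : ℝ) 1 ∧ v₀ p.1 ≤ p.2 ∧ p.2 ≤ u₀ p.1})
    (M₃ : ℝ) (hM₃ : 0 ≤ M₃)
    (hlip : ∀ x ∈ Set.Icc (0 : ℝ) 1, ∀ y w : ℝ,
      v₀ x ≤ y → y ≤ u₀ x → v₀ x ≤ w → w ≤ u₀ x → y ≤ w →
        -(M₃ * (w - y)) ≤ f x w - f x y)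
    (hMlam : M₃ + lam ≤ 0) :
    ∃ v u : ℝ → ℝ, IsBVPSolution α δ η f v ∧ IsBVPSolution α δ η f u ∧
      (∀ x ∈ Set.Icc (0 : ℝ) 1, v₀ x ≤ v x ∧ v x ≤ u x ∧ u x ≤ u₀ x) ∧
      ∀ z : ℝ → ℝ, IsBVPSolution α δ η f z →
        (∀ x ∈ Set.Icc (0 : ℝ) 1, v₀ x ≤ z x ∧ z x ≤ u₀ x) →
        ∀ x ∈ Set.Icc (0 : ℝ) 1, v x ≤ z x ∧ z x ≤ u x := by
  refine existence_well_ordered_neg_lambda_general α lam δ η ν (by linarith) hν ⟨hη0, hη1.le⟩ hlam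
    hδ.le hH2 f u₀ v₀ hu₀.isSupersolution hv₀.isSubsolution horder hfcont ?_
  intro x hx y hy w hw hyw
  linarith [hlip x hx y w hy.1 hy.2 hw.1 hw.2 hyw,
    mul_nonpos_of_nonpos_of_nonneg hMlam (sub_nonneg.2 hyw)]
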